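/- arXiv:1601.07158 — 2 statements merged into one kernel-verified Lean document; each statement's English description precedes it below -/
import Mathlib

section
/- ℤ_(2) is equal to the set of rational numbers of the form 2(x₁₁ + x₁₂ + y₁₁ + y₁₂) where there exist rationals x_{ij}, y_{ij} (for i ∈ {1,2}, j ∈ {1,2,3,4}) satisfying f_{3,3}(x₁₁,x₁₂,x₁₃,x₁₄)² + f_{3,3}(x₂₁,x₂₂,x₂₃,x₂₄)² + f_{2,5}(y₁₁,y₁₂,y₁₃,y₁₄)² + f_{2,5}(y₂₁,y₂₂,y₂₃,y₂₄)² = 0. -/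
/-- The polynomial `f_{a,b}(x₁,x₂,x₃,x₄) = x₁² − a·x₂² − b·x₃² + a·b·x₄² − 1`. -/
def fab (a b x₁ x₂ x₃ x₄ : ℚ) : ℚ :=
  x₁ ^ 2 - a * x₂ ^ 2 - b * x₃ ^ 2 + a * b * x₄ ^ 2 - 1

/-- `ℤ_(p)` : the set of rational numbers with nonnegative `p`-adic valuation,
i.e. whose denominator is not divisible by `p`, viewed as a subset of `ℚ`. -/
def Zloc (p : ℕ) : Set ℚ := {x : ℚ | ¬ (p ∣ x.den)}

/-!
Since `2 (x₁ + x₂)` is the reduced trace of `(x₁ + x₂ i + x₃ j + x₄ k) (1 + i / a)`, the claim is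
that `ℤ_(2)` is the sum of two sets of traces of elements of fixed norm, taken in the quaternion
algebras `(3, 3)` and `(2, 5)` over `ℚ`. Both algebras ramify at `2`: their norm forms have no
primitive zero modulo `16`, which forces such traces to be integral at `2`.

For the converse, eliminating `x₁` from `fab 2 5 = 0` shows that `b` is a trace for `(2, 5)` as soon
as `2 (b² - 2) = x² - 10 q z²` with `q = e² - 2 f²`. For `b = B / D` with `D` odd and
`N = B² - 2 D²` a nonsquare modulo `5`, Dirichlet's theorem provides a prime `q` for which both
equations are solvable over `ℝ` and over `ℚ_p` for all odd `p`, hence over `ℚ` by Legendre's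
theorem. Finally every `z ∈ ℤ_(2)` can be moved into this case by subtracting a trace for `(3, 3)`:
one of `± 2` works when `z` is integral at `5`; otherwise one uses that the `(3, 3)` algebra splits
at `5`, so that its traces `8 / (-2 - 3 r²) - 2` come `5`-adically close enough to `z`.
-/

/-- `c` is a norm from `K[√a]`. Equivalently, for `a, c, 2 ≠ 0`, the quaternion algebra `(a, c)`
over `K` splits; over a local field this says that the Hilbert symbol `(a, c)` is `1`. -/
def IsQuadNorm {K : Type*} [Field K] (a c : K) : Prop :=
  ∃ x y : K, c = x ^ 2 - a * y ^ 2

namespace IsQuadNorm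

variable {K : Type*} [Field K] {a b c : K}

theorem of_isSquare_right (hc : IsSquare c) : IsQuadNorm a c := by
  obtain ⟨s, rfl⟩ := hc
  exact ⟨s, 0, by ring⟩

theorem mul (hb : IsQuadNorm a b) (hc : IsQuadNorm a c) : IsQuadNorm a (b * c) := by
  obtain ⟨x, y, rfl⟩ := hb
  obtain ⟨u, v, rfl⟩ := hc
  exact ⟨x * u + a * y * v, x * v + y * u, by ring⟩

theorem map {L : Type*} [Field L] (f : K →+* L) (h : IsQuadNorm a c) : IsQuadNorm (f a) (f c) := by
  obtain ⟨x, y, rfl⟩ := h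
  exact ⟨f x, f y, by simp⟩

theorem of_mul_left (hb₀ : b ≠ 0) (hb : IsQuadNorm a b) (hbc : IsQuadNorm a (b * c)) :
    IsQuadNorm a c := by
  have h : c = b * (b * c) * (b⁻¹ * b⁻¹) := by field_simp
  rw [h]
  exact (hb.mul hbc).mul (of_isSquare_right ⟨b⁻¹, rfl⟩)

variable [NeZero (2 : K)]

theorem of_isSquare_left (ha₀ : a ≠ 0) (ha : IsSquare a) : IsQuadNorm a c := by
  obtain ⟨s, rfl⟩ := ha
  have hs : s ≠ 0 := left_ne_zero_of_mul ha₀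
  have h2 : (2 : K) ≠ 0 := two_ne_zero
  exact ⟨(c + 1) / 2, (c - 1) / (2 * s), by field_simp; ring⟩

theorem of_isotropic (ha₀ : a ≠ 0) {x y z : K} (h : x ^ 2 = a * y ^ 2 + b * z ^ 2)
    (hyz : y ≠ 0 ∨ z ≠ 0) : IsQuadNorm a b := by
  by_cases hz : z = 0
  · have hy : y ≠ 0 := by tauto
    refine of_isSquare_left ha₀ ⟨x / y, ?_⟩
    field_simp
    simp [h, hz]
  · refine ⟨x / z, y / z, ?_⟩
    field_simp
    linear_combination -h

theorem symm (hb₀ : b ≠ 0) (h : IsQuadNorm a b) : IsQuadNorm b a := by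
  obtain ⟨x, y, h⟩ := h
  exact of_isotropic hb₀ (x := x) (y := 1) (z := y) (by linear_combination -h) (.inl one_ne_zero)

end IsQuadNorm

section Padic

open scoped NumberTheorySymbols

variable {p : ℕ} [Fact p.Prime]

theorem isSquare_padic_of_norm_sub_one_lt_one (hp : p ≠ 2) {u : ℚ_[p]} (hu : ‖u - 1‖ < 1) :
    IsSquare u := by
  have hu_norm : ‖u‖ ≤ 1 := by
    have h := Padic.nonarchimedean (u - 1) 1
    rw [sub_add_cancel, norm_one] at h
    exact h.trans (max_le hu.le le_rfl)
  have h2 : ‖(2 : ℤ_[p])‖ = 1 := by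
    have h : IsUnit ((2 : ℕ) : ℤ_[p]) := by
      rw [PadicInt.isUnit_iff, PadicInt.norm_natCast_eq_one_iff]
      exact (Nat.coprime_primes Fact.out Nat.prime_two).2 hp
    exact PadicInt.isUnit_iff.1 (by exact_mod_cast h)
  let u' : ℤ_[p] := ⟨u, hu_norm⟩
  have hu' : ‖(1 : ℤ_[p]) - u'‖ < 1 := by rw [norm_sub_rev]; exact hu
  obtain ⟨z, hz, -⟩ := hensels_lemma (F := (.X ^ 2 - .C u' : Polynomial ℤ_[p])) (a := (1 : ℤ_[p]))
    (by simpa [h2, one_add_one_eq_two] using hu')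
  have hz' : z ^ 2 = u' := sub_eq_zero.1 (by simpa using hz)
  refine ⟨z, ?_⟩
  rw [← sq]
  exact_mod_cast (congrArg ((↑) : ℤ_[p] → ℚ_[p]) hz').symm

theorem isSquare_padic_of_isSquare_zmod (hp : p ≠ 2) {a : ℤ} (hpa : ¬ (p : ℤ) ∣ a)
    (ha : IsSquare (a : ZMod p)) : IsSquare (a : ℚ_[p]) := by
  obtain ⟨c, hc⟩ := ha
  obtain ⟨c, rfl⟩ := ZMod.intCast_surjective c
  have hac : (p : ℤ) ∣ a - c ^ 2 := by
    rw [← ZMod.intCast_zmod_eq_zero_iff_dvd]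
    push_cast
    rw [hc]; ring
  have hpc : ¬ (p : ℤ) ∣ c := fun h ↦
    hpa ((dvd_sub_left (h.trans (dvd_pow_self c two_ne_zero))).1 hac)
  have hc_norm : ‖(c : ℚ_[p])‖ = 1 :=
    le_antisymm (Padic.norm_int_le_one c) (not_lt.1 (mt Padic.norm_intCast_lt_one_iff.1 hpc))
  have hc₀ : (c : ℚ_[p]) ≠ 0 := norm_ne_zero_iff.1 (by simp [hc_norm])
  have hsq : IsSquare ((a : ℚ_[p]) / c ^ 2) := by
    refine isSquare_padic_of_norm_sub_one_lt_one hp ?_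
    rw [div_sub_one (pow_ne_zero 2 hc₀), norm_div, norm_pow, hc_norm, one_pow, div_one]
    exact_mod_cast Padic.norm_intCast_lt_one_iff.2 hac
  rw [← div_mul_cancel₀ (a : ℚ_[p]) (pow_ne_zero 2 hc₀)]
  exact hsq.mul (.sq _)

theorem isSquare_padic_of_jacobiSym_eq_one (hp : p ≠ 2) {a : ℤ} (ha : J(a | p) = 1) :
    IsSquare (a : ℚ_[p]) := by
  refine isSquare_padic_of_isSquare_zmod hp (fun h ↦ ?_) (ZMod.isSquare_of_jacobiSym_eq_one ha)
  have h0 : J(a | p) = 0 := by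
    rw [jacobiSym.mod_left, Int.emod_eq_zero_of_dvd h]
    exact jacobiSym.zero_left (Fact.out : p.Prime).one_lt
  lia

theorem IsQuadNorm.padic_of_not_dvd (hp : p ≠ 2) {a b : ℤ} (ha : ¬ (p : ℤ) ∣ a)
    (hb : ¬ (p : ℤ) ∣ b) : IsQuadNorm (a : ℚ_[p]) b := by
  have ha₀ : (a : ZMod p) ≠ 0 := mt (ZMod.intCast_zmod_eq_zero_iff_dvd a p).1 ha
  have hb₀ : (b : ZMod p) ≠ 0 := mt (ZMod.intCast_zmod_eq_zero_iff_dvd b p).1 hb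
  have hodd : Fintype.card (ZMod p) % 2 = 1 := by
    rw [ZMod.card]
    exact Nat.odd_iff.1 ((Fact.out : p.Prime).odd_of_ne_two hp)
  obtain ⟨y, z, hyz⟩ : ∃ y z : ZMod p, a * y ^ 2 + b * z ^ 2 = 1 := by
    obtain ⟨y, z, h⟩ := FiniteField.exists_root_sum_quadratic
      (f := .C (a : ZMod p) * .X ^ 2) (g := .C (b : ZMod p) * .X ^ 2 - 1)
      (by compute_degree!) (by compute_degree!) hodd
    exact ⟨y, z, by simpa [add_sub, sub_eq_zero] using h⟩
  obtain ⟨y, rfl⟩ := ZMod.intCast_surjective y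
  obtain ⟨z, rfl⟩ := ZMod.intCast_surjective z
  have hm : ((a * y ^ 2 + b * z ^ 2 : ℤ) : ZMod p) = 1 := by exact_mod_cast hyz
  obtain ⟨x, hx⟩ : IsSquare ((a * y ^ 2 + b * z ^ 2 : ℤ) : ℚ_[p]) := by
    refine isSquare_padic_of_isSquare_zmod hp ?_ (hm ▸ .one)
    rw [← ZMod.intCast_zmod_eq_zero_iff_dvd, hm]
    exact one_ne_zero
  have hyz₀ : y ≠ 0 ∨ z ≠ 0 := by
    by_contra! h
    simp [h.1, h.2] at hm
  refine of_isotropic (x := x) (y := y) (z := z) ?_ ?_ (by exact_mod_cast hyz₀)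
  · exact Int.cast_ne_zero.2 fun h ↦ ha (h ▸ dvd_zero _)
  · rw [sq, ← hx]; push_cast; ring

theorem sq_dvd_of_eq_sq_sub_mul_sq (a : ℤ) {x y : ℚ_[p]} {b : ℤ} (hy : ‖y‖ < 1)
    (hpb : (p : ℤ) ∣ b) (h : (b : ℚ_[p]) = x ^ 2 - a * y ^ 2) : (p : ℤ) ^ 2 ∣ b := by
  have hx : ‖x‖ < 1 := by
    have hay : ‖(a : ℚ_[p]) * y ^ 2‖ < 1 := by
      rw [norm_mul, norm_pow]
      exact mul_lt_one_of_nonneg_of_lt_one_right (Padic.norm_int_le_one a) (by positivity)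
        (pow_lt_one₀ (norm_nonneg y) hy two_ne_zero)
    have hx2 : ‖x ^ 2‖ < 1 := by
      rw [← sub_add_cancel (x ^ 2) (a * y ^ 2), ← h]
      exact (Padic.nonarchimedean _ _).trans_lt (max_lt (Padic.norm_intCast_lt_one_iff.2 hpb) hay)
    rwa [norm_pow, pow_lt_one_iff_of_nonneg (norm_nonneg x) two_ne_zero] at hx2
  obtain ⟨x', hx'⟩ := (PadicInt.norm_lt_one_iff_dvd ⟨x, hx.le⟩).1 hx
  obtain ⟨y', hy'⟩ := (PadicInt.norm_lt_one_iff_dvd ⟨y, hy.le⟩).1 hy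
  have hx' : x = p * x' := congrArg ((↑) : ℤ_[p] → ℚ_[p]) hx'
  have hy' : y = p * y' := congrArg ((↑) : ℤ_[p] → ℚ_[p]) hy'
  rw [← PadicInt.pow_p_dvd_int_iff]
  refine ⟨x' ^ 2 - a * y' ^ 2, Subtype.coe_injective ?_⟩
  push_cast
  rw [h, hx', hy']
  ring

theorem IsQuadNorm.isSquare_zmod {a b : ℤ} (hpb : (p : ℤ) ∣ b) (hb : ¬ (p : ℤ) ^ 2 ∣ b)
    (h : IsQuadNorm (a : ℚ_[p]) b) : IsSquare (a : ZMod p) := by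
  obtain ⟨x, y, h⟩ := h
  have hy : 1 ≤ ‖y‖ := not_lt.1 fun hy ↦ hb (sq_dvd_of_eq_sq_sub_mul_sq a hy hpb h)
  have hy₀ : y ≠ 0 := norm_pos_iff.1 (one_pos.trans_le hy)
  have hlt : ‖(x / y) ^ 2 - (a : ℚ_[p])‖ < 1 := by
    have : (x / y) ^ 2 - (a : ℚ_[p]) = b / y ^ 2 := by rw [h]; field_simp
    rw [this, norm_div, norm_pow]
    exact (div_le_self (norm_nonneg _) (one_le_pow₀ hy)).trans_lt
      (Padic.norm_intCast_lt_one_iff.2 hpb)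
  have hxy : ‖x / y‖ ≤ 1 := by
    have h2 := Padic.nonarchimedean ((x / y) ^ 2 - (a : ℚ_[p])) (a : ℚ_[p])
    rw [sub_add_cancel, norm_pow] at h2
    exact (pow_le_one_iff_of_nonneg (norm_nonneg _) two_ne_zero).1
      (h2.trans (max_le hlt.le (Padic.norm_int_le_one a)))
  let r : ℤ_[p] := ⟨x / y, hxy⟩
  have hker : r ^ 2 - (a : ℤ_[p]) ∈ RingHom.ker (PadicInt.toZMod (p := p)) := by
    rw [PadicInt.ker_toZMod, IsLocalRing.mem_maximalIdeal, PadicInt.mem_nonunits]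
    exact hlt
  refine ⟨PadicInt.toZMod r, ?_⟩
  have := (RingHom.mem_ker).1 hker
  rw [map_sub, map_pow, map_intCast, sub_eq_zero, sq] at this
  exact this.symm

end Padic

theorem isSquare_zmod_of_squarefree (a : ℤ) (n : ℕ) (hn : Squarefree n)
    (h : ∀ p : ℕ, p.Prime → p ∣ n → IsSquare (a : ZMod p)) : IsSquare (a : ZMod n) := by
  induction n using Nat.recOnMul with
  | zero => exact absurd rfl hn.ne_zero
  | one => exact ⟨0, Subsingleton.elim _ _⟩
  | prime p hp => exact h p hp dvd_rfl
  | mul m k ihm ihk =>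
    have hm : IsSquare (a : ZMod m) := ihm hn.of_mul_left fun p hp hd ↦ h p hp (hd.mul_right k)
    have hk : IsSquare (a : ZMod k) := ihk hn.of_mul_right fun p hp hd ↦ h p hp (hd.mul_left m)
    let e := ZMod.chineseRemainder (Nat.coprime_of_squarefree_mul hn)
    have hmk : IsSquare (e a) := by
      obtain ⟨r, hr⟩ := hm
      obtain ⟨s, hs⟩ := hk
      exact ⟨(r, s), by rw [map_intCast]; exact Prod.ext hr hs⟩
    simpa using hmk.map e.symm

/-- The Hilbert symbol `(a, b)` is trivial at `ℝ` and at every odd prime. The prime `2` is left out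
because the product formula makes the condition there automatic. -/
def IsLocalQuadNorm (a b : ℤ) : Prop :=
  IsQuadNorm (a : ℝ) b ∧ ∀ (p : ℕ) [Fact p.Prime], p ≠ 2 → IsQuadNorm (a : ℚ_[p]) b

namespace IsLocalQuadNorm

variable {a b c : ℤ}

theorem symm (hb : b ≠ 0) (h : IsLocalQuadNorm a b) : IsLocalQuadNorm b a :=
  ⟨h.1.symm (Int.cast_ne_zero.2 hb), fun p _ hp ↦ (h.2 p hp).symm (Int.cast_ne_zero.2 hb)⟩

theorem of_isQuadNorm (h : IsQuadNorm (a : ℚ) b) : IsLocalQuadNorm a b :=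
  ⟨by simpa using h.map (Rat.castHom ℝ), fun p _ _ ↦ by simpa using h.map (Rat.castHom ℚ_[p])⟩

theorem of_mul_left (hb₀ : b ≠ 0) (hb : IsLocalQuadNorm a b) (hbc : IsLocalQuadNorm a (b * c)) :
    IsLocalQuadNorm a c := by
  simp only [IsLocalQuadNorm, Int.cast_mul] at hbc
  exact ⟨hb.1.of_mul_left (Int.cast_ne_zero.2 hb₀) hbc.1,
    fun p _ hp ↦ (hb.2 p hp).of_mul_left (Int.cast_ne_zero.2 hb₀) (hbc.2 p hp)⟩

theorem isSquare_zmod (hb : Squarefree b) (h : IsLocalQuadNorm a b) :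
    IsSquare (a : ZMod b.natAbs) := by
  refine isSquare_zmod_of_squarefree a b.natAbs (Int.squarefree_natAbs.2 hb) fun p hp hpb ↦ ?_
  have : Fact p.Prime := ⟨hp⟩
  obtain rfl | hp2 := eq_or_ne p 2
  · exact isSquare_of_charTwo' _
  · refine (h.2 p hp2).isSquare_zmod (Int.natCast_dvd.2 hpb) fun hsq ↦ ?_
    exact (Nat.prime_iff_prime_int.1 hp).not_isUnit (hb p (sq (p : ℤ) ▸ hsq))

theorem exists_sq_sub_eq_mul (h : IsSquare (a : ZMod b.natAbs)) (hab : a.natAbs ≤ b.natAbs)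
    (hb : 2 ≤ b.natAbs) : ∃ t c : ℤ, t ^ 2 - a = b * c ∧ c.natAbs < b.natAbs := by
  have : NeZero b.natAbs := ⟨by lia⟩
  obtain ⟨r, hr⟩ := h
  have hr_le : 2 * |r.valMinAbs| ≤ |b| := by
    rw [Int.abs_eq_natAbs, Int.abs_eq_natAbs]
    have := r.natAbs_valMinAbs_le
    lia
  obtain ⟨c, hc⟩ : b ∣ r.valMinAbs ^ 2 - a := by
    rw [← Int.natAbs_dvd, ← ZMod.intCast_zmod_eq_zero_iff_dvd]
    rw [Int.cast_sub, Int.cast_pow, ZMod.coe_valMinAbs, hr, sq, sub_self]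
  refine ⟨r.valMinAbs, c, hc, ?_⟩
  have hbc : |b| * |c| ≤ |r.valMinAbs| ^ 2 + |a| := by
    rw [← abs_mul, ← hc, ← abs_pow]
    exact abs_sub _ _
  zify at hab hb ⊢
  nlinarith [abs_nonneg r.valMinAbs]

theorem isQuadNorm_of_squarefree (hb : Squarefree b) (hab : a.natAbs ≤ b.natAbs)
    (ha₀ : a ≠ 0) (h : IsLocalQuadNorm a b)
    (ih : ∀ c : ℤ, c ≠ 0 → c.natAbs < b.natAbs → IsLocalQuadNorm a c → IsQuadNorm (a : ℚ) c) :
    IsQuadNorm (a : ℚ) b := by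
  have hb₀ : b ≠ 0 := hb.ne_zero
  obtain hb1 | hb2 : b.natAbs = 1 ∨ 2 ≤ b.natAbs := by lia
  · obtain rfl | rfl := Int.natAbs_eq_iff.1 hb1
    · exact .of_isSquare_right (by simp)
    obtain rfl | rfl : a = 1 ∨ a = -1 := by lia
    · exact .of_isSquare_left (by simp) (by simp)
    · obtain ⟨x, y, hxy⟩ := h.1
      push_cast at hxy
      nlinarith
  obtain ⟨t, c, hc, hcb⟩ := exists_sq_sub_eq_mul (h.isSquare_zmod hb) hab hb2
  have hbc : IsQuadNorm (a : ℚ) ((b * c : ℤ) : ℚ) := ⟨t, 1, by rw [← hc]; push_cast; ring⟩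
  obtain rfl | hc₀ := eq_or_ne c 0
  · refine .of_isSquare_left (Int.cast_ne_zero.2 ha₀) ⟨t, ?_⟩
    exact_mod_cast (by linarith : a = t * t)
  have hac : IsQuadNorm (a : ℚ) c := ih c hc₀ hcb (h.of_mul_left hb₀ (of_isQuadNorm hbc))
  rw [mul_comm, Int.cast_mul] at hbc
  exact hac.of_mul_left (Int.cast_ne_zero.2 hc₀) hbc

theorem isQuadNorm (ha : a ≠ 0) (hb : b ≠ 0) (h : IsLocalQuadNorm a b) : IsQuadNorm (a : ℚ) b := by
  induction hn : a.natAbs + b.natAbs using Nat.strong_induction_on generalizing a b with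
  | _ n ih =>
  wlog hab : a.natAbs ≤ b.natAbs generalizing a b
  · exact (this hb ha (h.symm hb) (by lia) (by lia)).symm (Int.cast_ne_zero.2 ha)
  by_cases hsq : Squarefree b
  · exact isQuadNorm_of_squarefree hsq hab ha h fun c hc hcb hac ↦
      ih _ (by lia) ha hc hac rfl
  · obtain ⟨d, ⟨e, rfl⟩, hd⟩ : ∃ d : ℤ, d * d ∣ b ∧ ¬ IsUnit d := by
      simpa [Squarefree] using hsq
    have hdd : d * d ≠ 0 := left_ne_zero_of_mul hb
    have he : e ≠ 0 := right_ne_zero_of_mul hb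
    have hlt : e.natAbs < (d * d * e).natAbs := by
      have hd2 : 2 ≤ d.natAbs := by
        rw [Int.isUnit_iff_natAbs_eq] at hd
        have := Int.natAbs_pos.2 (left_ne_zero_of_mul hdd)
        lia
      rw [Int.natAbs_mul, Int.natAbs_mul]
      have hdd4 : 4 ≤ d.natAbs * d.natAbs := Nat.mul_le_mul hd2 hd2
      nlinarith [Int.natAbs_pos.2 he]
    have hdd_norm : IsQuadNorm (a : ℚ) ((d * d : ℤ) : ℚ) := .of_isSquare_right ⟨d, Int.cast_mul d d⟩
    have hae : IsLocalQuadNorm a e := (of_isQuadNorm hdd_norm).of_mul_left hdd h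
    rw [Int.cast_mul]
    exact hdd_norm.mul (ih _ (by lia) ha he hae rfl)

end IsLocalQuadNorm

section PrimeChoice

open scoped NumberTheorySymbols

theorem exists_prime_natCast_eq_and_natCast_eq {m n : ℕ} [NeZero m] [NeZero n] (hmn : m.Coprime n)
    {a : ZMod m} {b : ZMod n} (ha : IsUnit a) (hb : IsUnit b) :
    ∃ q : ℕ, q.Prime ∧ (q : ZMod m) = a ∧ (q : ZMod n) = b := by
  let e := ZMod.chineseRemainder hmn
  obtain ⟨q, -, hq, hqab⟩ := Nat.forall_exists_prime_gt_and_eq_mod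
    ((Prod.isUnit_iff.2 ⟨ha, hb⟩ : IsUnit (a, b)).map e.symm) 0
  have he : (q : ZMod m × ZMod n) = (a, b) := by
    simpa only [map_natCast, RingEquiv.apply_symm_apply] using congrArg e hqab
  exact ⟨q, hq, congrArg Prod.fst he, congrArg Prod.snd he⟩

theorem exists_prime_mod_eight_and_dvd {r : ℕ} (hr : Odd r) {M : ℤ} (hM : Odd M)
    (hM5 : ¬ 5 ∣ M) : ∃ q : ℕ, q.Prime ∧ q ≡ r [MOD 8] ∧ M ∣ 5 * q - 1 := by
  have hM₀ : NeZero M.natAbs := ⟨by rintro h; simp [Int.natAbs_eq_zero.1 h] at hM⟩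
  have h5 : IsUnit ((5 : ℕ) : ZMod M.natAbs) := by
    rw [ZMod.isUnit_iff_coprime, Nat.prime_five.coprime_iff_not_dvd, ← Int.natCast_dvd]
    exact hM5
  have hr8 : IsUnit (r : ZMod 8) :=
    (ZMod.isUnit_iff_coprime r 8).2 (Nat.Coprime.pow_right 3 hr.coprime_two_right)
  have h8 : Nat.Coprime 8 M.natAbs :=
    Nat.Coprime.pow_left 3 (Int.natAbs_odd.2 hM).coprime_two_left
  obtain ⟨s, hs⟩ := h5.exists_right_inv
  obtain ⟨q, hq, hqr, hqs⟩ :=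
    exists_prime_natCast_eq_and_natCast_eq h8 hr8 (IsUnit.of_mul_eq_one_right _ hs)
  refine ⟨q, hq, (ZMod.natCast_eq_natCast_iff _ _ _).1 hqr, ?_⟩
  rw [← Int.natAbs_dvd, ← ZMod.intCast_zmod_eq_zero_iff_dvd]
  push_cast at hs ⊢
  rw [hqs, hs, sub_self]

theorem jacobiSym_eq_one_of_dvd_sub_one {M : ℤ} (hM : Odd M) {n : ℕ} (hn : n % 4 = 1)
    (hMn : M ∣ n - 1) : J(M | n) = 1 := by
  have hodd : Odd n := Nat.odd_iff.2 (by lia)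
  have hmod : n ≡ 1 [MOD 4 * M.natAbs] := by
    refine (Nat.modEq_and_modEq_iff_modEq_mul ?_).1 ⟨hn, ?_⟩
    · exact Nat.Coprime.pow_left 2 (Int.natAbs_odd.2 hM).coprime_two_left
    · exact (Nat.modEq_iff_dvd.2 (by simpa [Int.natAbs_dvd] using hMn)).symm
  rw [jacobiSym.mod_right M hodd, hmod, ← jacobiSym.mod_right M odd_one, jacobiSym.one_right]

theorem jacobiSym_eq_neg_one_of_dvd_sub_one {M : ℤ} (hM : M % 4 = 3) {n : ℕ} (hn : n % 4 = 3)
    (hMn : M ∣ n - 1) : J(M | n) = -1 := by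
  have hodd : Odd n := Nat.odd_iff.2 (by lia)
  have hone : J(n | M.natAbs) = 1 := by
    rw [jacobiSym.mod_left' (a₂ := 1), jacobiSym.one_left]
    exact (Int.modEq_iff_dvd.2 (Int.natAbs_dvd.2 hMn)).symm
  obtain hpos | hneg := Int.natAbs_eq M
  · rw [hpos, jacobiSym.quadratic_reciprocity_three_mod_four (by lia) hn, hone]
  · rw [hneg, jacobiSym.neg _ hodd, ZMod.χ₄_nat_three_mod_four hn,
      jacobiSym.quadratic_reciprocity_one_mod_four (by lia) hodd, hone, mul_one]

theorem jacobiSym_two_eq_one {n : ℕ} (hn : n % 8 = 1 ∨ n % 8 = 7) : J(2 | n) = 1 := by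
  rw [jacobiSym.at_two (Nat.odd_iff.2 (by lia)), ZMod.χ₈_nat_eq_if_mod_eight]
  grind

theorem exists_prime_jacobiSym_two_mul_eq_one {N : ℤ} (hN : N % 8 = 7 ∨ N % 4 = 2)
    (h5 : J(N | 5) = -1) : ∃ q : ℕ, q.Prime ∧ (q % 8 = 1 ∨ q % 8 = 7) ∧ J(2 * N | q) = 1 ∧
      ∀ p : ℕ, p.Prime → p ≠ 2 → (p : ℤ) ∣ N → (p : ℤ) ∣ 5 * q - 1 := by
  have hN5 : ¬ 5 ∣ N := by
    intro h
    rw [jacobiSym.mod_left, Nat.cast_ofNat, Int.emod_eq_zero_of_dvd h] at h5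
    norm_num at h5
  obtain hN | hN := hN
  · obtain ⟨q, hq, hq8, hNq⟩ :=
      exists_prime_mod_eight_and_dvd (r := 7) (by decide) (Int.odd_iff.2 (by lia)) hN5
    have : NeZero q := ⟨hq.ne_zero⟩
    have hq8 : q % 8 = 7 := hq8
    refine ⟨q, hq, .inr hq8, ?_, fun p _ _ hp ↦ hp.trans hNq⟩
    have h := jacobiSym_eq_neg_one_of_dvd_sub_one (M := N) (n := 5 * q) (by lia) (by lia)
      (by exact_mod_cast hNq)
    rw [jacobiSym.mul_right, h5] at h
    rw [jacobiSym.mul_left, jacobiSym_two_eq_one (.inr hq8)]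
    lia
  · obtain ⟨M, rfl⟩ : 2 ∣ N := by lia
    have hM : Odd M := Int.odd_iff.2 (by lia)
    obtain ⟨q, hq, hq8, hMq⟩ :=
      exists_prime_mod_eight_and_dvd (r := 1) odd_one hM fun h ↦ hN5 (h.mul_left 2)
    have : NeZero q := ⟨hq.ne_zero⟩
    have hq8 : q % 8 = 1 := hq8
    refine ⟨q, hq, .inl hq8, ?_, fun p hp hp2 hpN ↦ ?_⟩
    · have h := jacobiSym_eq_one_of_dvd_sub_one (n := 5 * q) hM (by lia) (by exact_mod_cast hMq)
      have h25 : J(2 | 5) = -1 := by norm_num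
      rw [jacobiSym.mul_left, h25] at h5
      rw [jacobiSym.mul_right] at h
      rw [jacobiSym.mul_left, jacobiSym.mul_left, jacobiSym_two_eq_one (.inl hq8)]
      grind
    · have hp2 : IsCoprime (p : ℤ) 2 :=
        Nat.isCoprime_iff_coprime.2 ((Nat.coprime_primes hp Nat.prime_two).2 hp2)
      exact (hp2.dvd_of_dvd_mul_left hpN).trans hMq

end PrimeChoice

section RationalTraces

open scoped NumberTheorySymbols

/-- The rationals `2 (x₁ + x₂)` at the zeros of `f_{a,b}`. For `a ≠ 0` they are the reduced traces
of the elements of reduced norm `1 - 1 / a` in the quaternion algebra `(a, b)` over `ℚ`: multiply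
`x₁ + x₂ i + x₃ j + x₄ k`, which has norm `1`, by `1 + i / a`. -/
def traceSet (a b : ℚ) : Set ℚ :=
  {z | ∃ x₁ x₂ x₃ x₄, z = 2 * (x₁ + x₂) ∧ fab a b x₁ x₂ x₃ x₄ = 0}

theorem not_natCast_dvd_of_prime_ne {p r : ℕ} (hp : p.Prime) (hr : r.Prime) (h : p ≠ r) :
    ¬ (p : ℤ) ∣ r := by
  rwa [Int.natCast_dvd_natCast, Nat.prime_dvd_prime_iff_eq hp hr]

instance fact_prime_five : Fact (Nat.Prime 5) := ⟨Nat.prime_five⟩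

theorem isLocalQuadNorm_two_of_prime {q : ℕ} (hq : q.Prime) (hq8 : q % 8 = 1 ∨ q % 8 = 7) :
    IsLocalQuadNorm 2 q := by
  refine ⟨.of_isSquare_right (Real.isSquare_iff.2 (by positivity)), fun p hp hp2 ↦ ?_⟩
  obtain rfl | hpq := eq_or_ne p q
  · refine .of_isSquare_left (by norm_num) ?_
    exact isSquare_padic_of_jacobiSym_eq_one hp2 (jacobiSym_two_eq_one hq8)
  · exact .padic_of_not_dvd hp2 (not_natCast_dvd_of_prime_ne hp.out Nat.prime_two hp2)
      (not_natCast_dvd_of_prime_ne hp.out hq hpq)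

theorem isLocalQuadNorm_ten_mul_two_mul {N : ℤ} (hN : J(N | 5) = -1)
    (hN2 : ∀ p : ℕ, p.Prime → p ≠ 2 → (p : ℤ) ∣ N → J(2 | p) = 1) {q : ℕ} (hq : q.Prime)
    (hqN : J(2 * N | q) = 1)
    (hqN_dvd : ∀ p : ℕ, p.Prime → p ≠ 2 → (p : ℤ) ∣ N → (p : ℤ) ∣ 5 * q - 1) :
    IsLocalQuadNorm (10 * q) (2 * N) := by
  have h10q₀ : 10 * (q : ℤ) ≠ 0 := by simpa using hq.ne_zero
  refine ⟨.of_isSquare_left (Int.cast_ne_zero.2 h10q₀) ?_, fun p hp hp2 ↦ ?_⟩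
  · exact Real.isSquare_iff.2 (by positivity)
  obtain rfl | hp5 := eq_or_ne p 5
  · refine .of_isSquare_right (isSquare_padic_of_jacobiSym_eq_one hp2 ?_)
    rw [jacobiSym.mul_left, hN]
    norm_num
  obtain rfl | hpq := eq_or_ne p q
  · exact .of_isSquare_right (isSquare_padic_of_jacobiSym_eq_one hp2 hqN)
  by_cases hpN : (p : ℤ) ∣ N
  · refine .of_isSquare_left (Int.cast_ne_zero.2 h10q₀) (isSquare_padic_of_jacobiSym_eq_one hp2 ?_)
    have hmod : 10 * (q : ℤ) ≡ 2 [ZMOD p] := by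
      have h := (hqN_dvd p hp.out hp2 hpN).mul_left 2
      exact (Int.modEq_iff_dvd.2 (by ring_nf at h ⊢; exact h)).symm
    rw [jacobiSym.mod_left' hmod, hN2 p hp.out hp2 hpN]
  · have hpZ : Prime (p : ℤ) := Nat.prime_iff_prime_int.1 hp.out
    have h2 := not_natCast_dvd_of_prime_ne hp.out Nat.prime_two hp2
    have h5 := not_natCast_dvd_of_prime_ne hp.out Nat.prime_five hp5
    refine .padic_of_not_dvd hp2 ?_ (hpZ.not_dvd_mul h2 hpN)
    rw [show 10 * (q : ℤ) = 2 * (5 * q) by ring]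
    exact hpZ.not_dvd_mul h2 (hpZ.not_dvd_mul h5 (not_natCast_dvd_of_prime_ne hp.out hq hpq))

theorem jacobiSym_two_eq_one_of_dvd_sq_sub {B D : ℤ} (hBD : IsCoprime B D) {p : ℕ} (hp : p.Prime)
    (hp2 : p ≠ 2) (h : (p : ℤ) ∣ B ^ 2 - 2 * D ^ 2) : J(2 | p) = 1 := by
  have hpZ : Prime (p : ℤ) := Nat.prime_iff_prime_int.1 hp
  have gcd_eq_one {x : ℤ} (hx : ¬ (p : ℤ) ∣ x) : x.gcd p = 1 :=
    Int.isCoprime_iff_gcd_eq_one.1 ((hpZ.irreducible.coprime_iff_not_dvd).2 hx).symm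
  have hpD : ¬ (p : ℤ) ∣ D := fun hD ↦ by
    have hB : (p : ℤ) ∣ B ^ 2 :=
      (dvd_sub_left ((hD.trans (dvd_pow_self D two_ne_zero)).mul_left 2)).1 h
    exact hpZ.not_isUnit (hBD.isUnit_of_dvd' (hpZ.dvd_of_dvd_pow hB) hD)
  have hpB : ¬ (p : ℤ) ∣ B := fun hB ↦ by
    have hD := (dvd_sub_right (hB.trans (dvd_pow_self B two_ne_zero))).1 h
    exact hpZ.not_dvd_mul (not_natCast_dvd_of_prime_ne hp Nat.prime_two hp2)
      (mt hpZ.dvd_of_dvd_pow hpD) hD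
  have key : J(2 * D ^ 2 | p) = J(B ^ 2 | p) := jacobiSym.mod_left' (Int.modEq_iff_dvd.2 h)
  rwa [jacobiSym.mul_left, jacobiSym.sq_one' (gcd_eq_one hpD), jacobiSym.sq_one' (gcd_eq_one hpB),
    mul_one] at key

theorem mem_traceSet_two_five {b q : ℚ} (hb : IsQuadNorm (10 * q) (2 * (b ^ 2 - 2)))
    (hq : IsQuadNorm 2 q) : b ∈ traceSet 2 5 := by
  obtain ⟨e, f, rfl⟩ := hq
  obtain ⟨x, z, h⟩ := hb
  refine ⟨b + x / 2, -b / 2 - x / 2, f * z, e * z / 2, by ring, ?_⟩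
  rw [fab]
  linear_combination h / 4

theorem div_mem_traceSet_two_five {B D : ℤ} (hBD : IsCoprime B D) (hD : Odd D)
    (h5 : ¬ IsSquare ((B ^ 2 - 2 * D ^ 2 : ℤ) : ZMod 5)) : (B / D : ℚ) ∈ traceSet 2 5 := by
  set N := B ^ 2 - 2 * D ^ 2 with hN_def
  have hN5 : J(N | 5) = -1 := ZMod.nonsquare_iff_jacobiSym_eq_neg_one.2 h5
  have hN : N % 8 = 7 ∨ N % 4 = 2 := by
    have hD2 := Int.eight_dvd_sq_sub_one_of_odd hD
    obtain hB | hB := Int.even_or_odd B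
    · obtain ⟨k, rfl⟩ := hB
      have : (k + k) ^ 2 = 4 * k ^ 2 := by ring
      lia
    · have hB2 := Int.eight_dvd_sq_sub_one_of_odd hB
      lia
  have hN₀ : 2 * N ≠ 0 := by lia
  obtain ⟨q, hq, hq8, hqN, hqN_dvd⟩ := exists_prime_jacobiSym_two_mul_eq_one hN hN5
  have hq₀ : (q : ℤ) ≠ 0 := Int.natCast_ne_zero.2 hq.ne_zero
  have h2q : IsQuadNorm (2 : ℚ) q := mod_cast
    (isLocalQuadNorm_two_of_prime hq hq8).isQuadNorm two_ne_zero hq₀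
  have h10q : IsQuadNorm (10 * q : ℚ) (2 * N) := mod_cast
    (isLocalQuadNorm_ten_mul_two_mul hN5
      (fun p hp hp2 ↦ jacobiSym_two_eq_one_of_dvd_sq_sub hBD hp hp2) hq hqN hqN_dvd).isQuadNorm
      (by lia) hN₀
  refine mem_traceSet_two_five ?_ h2q
  have hD₀ : (D : ℚ) ≠ 0 := Int.cast_ne_zero.2 (by rintro rfl; simp at hD)
  have hscale : 2 * ((B / D : ℚ) ^ 2 - 2) = 2 * N * ((D : ℚ)⁻¹ * (D : ℚ)⁻¹) := by
    rw [hN_def]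
    push_cast
    field_simp
  rw [hscale]
  exact h10q.mul (.of_isSquare_right ⟨_, rfl⟩)

end RationalTraces

section IntegralTraces

theorem Zloc_eq_coe_valuationSubring (p : ℕ) [Fact p.Prime] :
    Zloc p = (Rat.padicValuation p).valuationSubring := by
  ext x
  exact Rat.padicValuation_le_one_iff.symm

theorem mem_Zloc_of_mul_intCast_eq {p : ℕ} {z : ℚ} {m d : ℤ} (hd : ¬ (p : ℤ) ∣ d)
    (h : z * d = m) : z ∈ Zloc p := by
  have hd₀ : (d : ℚ) ≠ 0 := Int.cast_ne_zero.2 fun h ↦ hd (h ▸ dvd_zero _)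
  intro hp
  refine hd ((Int.natCast_dvd_natCast.2 hp).trans ?_)
  rw [eq_div_of_mul_eq hd₀ h, ← Rat.divInt_eq_div]
  exact Rat.den_dvd m d

theorem exists_pos_natCast_mul_eq_intCast {ι : Type*} [Finite ι] (v : ι → ℚ) :
    ∃ d : ℕ, 0 < d ∧ ∃ w : ι → ℤ, ∀ i, v i * d = w i := by
  have := Fintype.ofFinite ι
  choose m hm using fun i ↦ Finset.dvd_prod_of_mem (fun i ↦ (v i).den) (Finset.mem_univ i)
  refine ⟨∏ i, (v i).den, Finset.prod_pos fun i _ ↦ (v i).den_pos, fun i ↦ (v i).num * m i, ?_⟩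
  intro i
  rw [hm i]
  push_cast
  rw [← mul_assoc, Rat.mul_den_eq_num]

theorem exists_primitive_common_denom {ι : Type*} [Finite ι] (v : ι → ℚ) {p : ℕ} (hp : 1 < p) :
    ∃ (d : ℕ) (w : ι → ℤ), (∀ i, v i * d = w i) ∧ (p ∣ d → ∃ i, ¬ (p : ℤ) ∣ w i) := by
  classical
  have hex := exists_pos_natCast_mul_eq_intCast v
  obtain ⟨hd, w, hw⟩ := Nat.find_spec hex
  refine ⟨Nat.find hex, w, hw, fun ⟨k, hk⟩ ↦ ?_⟩
  by_contra! hpw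
  choose w' hw' using hpw
  rw [hk] at hd hw
  have hk₀ : 0 < k := Nat.pos_of_mul_pos_left hd
  have hp₀ : (p : ℚ) ≠ 0 := by positivity
  refine Nat.find_min hex (m := k) (by nlinarith) ⟨hk₀, w', fun i ↦ mul_left_cancel₀ hp₀ ?_⟩
  have h := hw i
  rw [hw' i] at h
  push_cast at h
  linear_combination h

/-- The norm form of the quaternion algebra `(a, b)` has no primitive zero modulo `16`:
a quantitative form of ramification at `2`, used to bound denominators there. -/
def IsAnisotropicModSixteen (a b : ℤ) : Prop :=
  ∀ x y z w : ℤ, 16 ∣ x ^ 2 - a * y ^ 2 - b * z ^ 2 + a * b * w ^ 2 →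
    2 ∣ x ∧ 2 ∣ y ∧ 2 ∣ z ∧ 2 ∣ w

theorem traceSet_subset_Zloc_two {a b : ℤ} (h : IsAnisotropicModSixteen a b) :
    traceSet a b ⊆ Zloc 2 := by
  rintro _ ⟨x, y, z, w, rfl, hf⟩
  obtain ⟨d, v, hv, hprim⟩ := exists_primitive_common_denom ![x, y, z, w] one_lt_two
  have hx : x * d = v 0 := hv 0
  have hy : y * d = v 1 := hv 1
  have hz : z * d = v 2 := hv 2
  have hw : w * d = v 3 := hv 3
  have hQ : v 0 ^ 2 - a * v 1 ^ 2 - b * v 2 ^ 2 + a * b * v 3 ^ 2 = d ^ 2 := by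
    qify
    rw [fab] at hf
    rw [← hx, ← hy, ← hz, ← hw]
    linear_combination (d : ℚ) ^ 2 * hf
  have h4 : ¬ 4 ∣ d := by
    rintro ⟨k, rfl⟩
    obtain ⟨i, hi⟩ := hprim ⟨2 * k, by ring⟩
    have := h (v 0) (v 1) (v 2) (v 3) ⟨k ^ 2, by rw [hQ]; push_cast; ring⟩
    fin_cases i <;> simp_all
  by_cases h2 : 2 ∣ d
  · obtain ⟨k, rfl⟩ := h2
    refine mem_Zloc_of_mul_intCast_eq (d := k) (m := v 0 + v 1) (by lia) ?_
    push_cast at *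
    linear_combination hx + hy
  · refine mem_Zloc_of_mul_intCast_eq (d := d) (m := 2 * (v 0 + v 1)) (by lia) ?_
    push_cast
    linear_combination 2 * (hx + hy)

theorem sq_mod_sixteen (x : ℤ) :
    (2 ∣ x ∧ (x ^ 2 % 16 = 0 ∨ x ^ 2 % 16 = 4)) ∨
      (¬ 2 ∣ x ∧ (x ^ 2 % 16 = 1 ∨ x ^ 2 % 16 = 9)) := by
  obtain ⟨k, rfl | rfl⟩ := Int.even_or_odd' x
  · have hsq : (2 * k) ^ 2 = 4 * k ^ 2 := by ring
    obtain ⟨j, rfl | rfl⟩ := Int.even_or_odd' k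
    · have : (2 * j) ^ 2 = 4 * j ^ 2 := by ring
      lia
    · have := Int.sq_mod_four_eq_one_of_odd (odd_two_mul_add_one j)
      lia
  · have := Int.eight_dvd_sq_sub_one_of_odd (odd_two_mul_add_one k)
    lia

theorem isAnisotropicModSixteen_three_three : IsAnisotropicModSixteen 3 3 := by
  intro x y z w h
  rcases sq_mod_sixteen x with _ | _ <;>
  rcases sq_mod_sixteen y with _ | _ <;>
  rcases sq_mod_sixteen z with _ | _ <;>
  rcases sq_mod_sixteen w with _ | _ <;> omega

theorem isAnisotropicModSixteen_two_five : IsAnisotropicModSixteen 2 5 := by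
  intro x y z w h
  rcases sq_mod_sixteen x with _ | _ <;>
  rcases sq_mod_sixteen y with _ | _ <;>
  rcases sq_mod_sixteen z with _ | _ <;>
  rcases sq_mod_sixteen w with _ | _ <;> omega

end IntegralTraces

section Decomposition

theorem two_mem_traceSet (a b : ℚ) : 2 ∈ traceSet a b :=
  ⟨1, 0, 0, 0, by norm_num, by norm_num [fab]⟩

theorem neg_two_mem_traceSet (a b : ℚ) : -2 ∈ traceSet a b :=
  ⟨-1, 0, 0, 0, by norm_num, by norm_num [fab]⟩

theorem add_intCast_mem_traceSet_two_five {z : ℚ} (hz : z ∈ Zloc 2) (k : ℤ)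
    (h5 : ¬ IsSquare ((z.num + z.den * k : ZMod 5) ^ 2 - 2 * (z.den : ZMod 5) ^ 2)) :
    z + k ∈ traceSet 2 5 := by
  have hodd : Odd (z.den : ℤ) := by
    rw [Int.odd_iff]
    have : ¬ 2 ∣ z.den := hz
    lia
  have hmem := div_mem_traceSet_two_five ((Rat.isCoprime_num_den z).add_mul_left_left k) hodd
    (by exact_mod_cast h5)
  have hden₀ : (z.den : ℚ) ≠ 0 := by simp
  rw [Int.cast_add, Int.cast_mul, Int.cast_natCast, add_div, Rat.num_div_den,
    mul_div_cancel_left₀ _ hden₀] at hmem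
  exact hmem

theorem exists_mem_traceSet_of_not_five_dvd_den {z : ℚ} (hz : z ∈ Zloc 2) (h5 : ¬ 5 ∣ z.den)
    (a b : ℚ) : ∃ t ∈ traceSet a b, z - t ∈ traceSet 2 5 := by
  have hnonsquare : ∀ n d : ZMod 5, d ≠ 0 →
      ¬ IsSquare ((n + d * (2 : ℤ)) ^ 2 - 2 * d ^ 2) ∨
      ¬ IsSquare ((n + d * (-2 : ℤ)) ^ 2 - 2 * d ^ 2) := by decide
  obtain h | h := hnonsquare z.num z.den (mt (ZMod.natCast_eq_zero_iff _ _).1 h5)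
  · refine ⟨-2, neg_two_mem_traceSet a b, ?_⟩
    simpa using add_intCast_mem_traceSet_two_five hz 2 h
  · refine ⟨2, two_mem_traceSet a b, ?_⟩
    simpa [sub_eq_add_neg] using add_intCast_mem_traceSet_two_five hz (-2) h

theorem mem_traceSet_two_five_of_norm_lt_one {b : ℚ} (hb : b ∈ Zloc 2)
    (h5 : ‖(b : ℚ_[5])‖ < 1) : b ∈ traceSet 2 5 := by
  have hnum : 5 ∣ b.num := by
    refine Padic.norm_intCast_lt_one_iff.1 (lt_of_le_of_lt ?_ h5)
    have h : ((b * b.den : ℚ) : ℚ_[5]) = b.num := by rw [Rat.mul_den_eq_num, Rat.cast_intCast]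
    rw [← h, Rat.cast_mul, norm_mul]
    exact mul_le_of_le_one_right (norm_nonneg _) (by exact_mod_cast Padic.norm_int_le_one b.den)
  have hden : ¬ 5 ∣ b.den := fun h ↦ by
    have := Nat.dvd_gcd (Int.natCast_dvd.1 hnum) h
    rw [b.reduced] at this
    norm_num at this
  have hnum0 : (b.num : ZMod 5) = 0 := (ZMod.intCast_zmod_eq_zero_iff_dvd _ _).2 hnum
  have hnonsquare : ∀ d : ZMod 5, d ≠ 0 → ¬ IsSquare ((0 + d * (0 : ℤ)) ^ 2 - 2 * d ^ 2) := by
    decide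
  have hmem := add_intCast_mem_traceSet_two_five hb 0 (by
    rw [hnum0]
    exact hnonsquare _ (mt (ZMod.natCast_eq_zero_iff _ _).1 hden))
  simpa using hmem

theorem div_sub_two_mem_traceSet_three_three (r : ℚ) : 8 / (-2 - 3 * r ^ 2) - 2 ∈ traceSet 3 3 := by
  have hr : -2 - 3 * r ^ 2 ≠ 0 := by nlinarith [sq_nonneg r]
  -- the second zero of `fab 3 3` on the line through `(-1, 0, 0, 0)` in direction `(1, 1, r, 0)`
  refine ⟨2 / (-2 - 3 * r ^ 2) - 1, 2 / (-2 - 3 * r ^ 2), 2 * r / (-2 - 3 * r ^ 2), 0, by ring, ?_⟩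
  rw [fab]
  field_simp
  ring

theorem isSquare_neg_two_sub_eight_div_div_three {w : ℚ_[5]} (hw : 1 < ‖w‖) :
    IsSquare ((-2 - 8 / w) / 3) := by
  refine isSquare_padic_of_norm_sub_one_lt_one (by norm_num) ?_
  have h3 : ‖(3 : ℚ_[5])‖ = 1 := by
    exact_mod_cast Padic.norm_natCast_eq_one_iff (p := 5) (n := 3) |>.2 (by norm_num)
  have h5 : ‖(5 : ℚ_[5])‖ < 1 := by exact_mod_cast Padic.norm_p_lt_one (p := 5)
  have h8 : ‖(8 : ℚ_[5]) / w‖ < 1 := by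
    have : ‖(8 : ℚ_[5])‖ ≤ 1 := by exact_mod_cast Padic.norm_int_le_one (p := 5) 8
    rw [norm_div]
    exact (div_lt_one (by positivity)).2 (this.trans_lt hw)
  have hsub : (-2 - 8 / w) / 3 - 1 = -(5 + 8 / w) / 3 := by ring
  rw [hsub, norm_div, norm_neg, h3, div_one]
  exact (Padic.nonarchimedean _ _).trans_lt (max_lt h5 h8)

theorem exists_rat_norm_sub_div_lt_one {w : ℚ_[5]} (hw : 1 < ‖w‖) :
    ∃ r : ℚ, ‖w - 8 / (-2 - 3 * (r : ℚ_[5]) ^ 2)‖ < 1 := by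
  obtain ⟨ρ, hρ⟩ := isSquare_neg_two_sub_eight_div_div_three hw
  have hw₀ : w ≠ 0 := norm_pos_iff.1 (one_pos.trans hw)
  have h8 : (8 : ℚ_[5]) ≠ 0 := by norm_num
  have hden : -2 - 3 * ρ ^ 2 = 8 / w := by
    rw [sq, ← hρ]
    ring
  have hden₀ : -2 - 3 * ρ ^ 2 ≠ 0 := hden ▸ div_ne_zero h8 hw₀
  have hcont : ContinuousAt (fun r : ℚ_[5] ↦ ‖w - 8 / (-2 - 3 * r ^ 2)‖) ρ := by
    fun_prop (disch := assumption)
  have hlt : ‖w - 8 / (-2 - 3 * ρ ^ 2)‖ < 1 := by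
    rw [hden, div_div_cancel₀ h8, sub_self, norm_zero]
    exact one_pos
  obtain ⟨_, ⟨r, rfl⟩, hr⟩ :=
    (Padic.denseRange_ratCast 5).inter_nhds_nonempty (hcont.eventually_lt_const hlt)
  exact ⟨r, hr⟩

theorem exists_mem_traceSet_norm_sub_lt_one {z : ℚ} (hz : 5 ∣ z.den) :
    ∃ t ∈ traceSet 3 3, ‖((z - t : ℚ) : ℚ_[5])‖ < 1 := by
  have hz_norm : 1 < ‖(z : ℚ_[5])‖ := by
    rwa [← not_le, Padic.norm_rat_le_one_iff_padicValuation_le_one, Rat.padicValuation_le_one_iff,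
      not_not]
  have hz2_norm : 1 < ‖(z : ℚ_[5]) + 2‖ := by
    have h2 : ‖(-2 : ℚ_[5])‖ ≤ 1 := by exact_mod_cast Padic.norm_int_le_one (p := 5) (-2)
    by_contra! h
    have := Padic.nonarchimedean ((z : ℚ_[5]) + 2) (-2)
    rw [add_neg_cancel_right] at this
    exact absurd (this.trans (max_le h h2)) hz_norm.not_ge
  obtain ⟨r, hr⟩ := exists_rat_norm_sub_div_lt_one hz2_norm
  refine ⟨_, div_sub_two_mem_traceSet_three_three r, ?_⟩
  convert hr using 2
  push_cast
  ring

theorem exists_mem_traceSet_three_three_sub_mem {z : ℚ} (hz : z ∈ Zloc 2) :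
    ∃ t ∈ traceSet 3 3, z - t ∈ traceSet 2 5 := by
  by_cases h5 : 5 ∣ z.den
  · obtain ⟨t, ht, hzt⟩ := exists_mem_traceSet_norm_sub_lt_one h5
    refine ⟨t, ht, mem_traceSet_two_five_of_norm_lt_one ?_ hzt⟩
    have ht2 : t ∈ Zloc 2 := traceSet_subset_Zloc_two isAnisotropicModSixteen_three_three ht
    rw [Zloc_eq_coe_valuationSubring] at hz ht2 ⊢
    exact sub_mem hz ht2
  · exact exists_mem_traceSet_of_not_five_dvd_den hz h5 3 3

open scoped Pointwise in
theorem Zloc_two_eq_traceSet_add_traceSet : Zloc 2 = traceSet 3 3 + traceSet 2 5 := by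
  ext z
  refine ⟨fun hz ↦ ?_, ?_⟩
  · obtain ⟨t, ht, hzt⟩ := exists_mem_traceSet_three_three_sub_mem hz
    exact Set.mem_add.2 ⟨t, ht, z - t, hzt, add_sub_cancel t z⟩
  · rintro ⟨s, hs, t, ht, rfl⟩
    have hs2 : s ∈ Zloc 2 := traceSet_subset_Zloc_two isAnisotropicModSixteen_three_three hs
    have ht2 : t ∈ Zloc 2 := traceSet_subset_Zloc_two isAnisotropicModSixteen_two_five ht
    rw [Zloc_eq_coe_valuationSubring] at hs2 ht2 ⊢
    exact add_mem hs2 ht2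

end Decomposition

theorem fab_one_zero_zero_zero (a b : ℚ) : fab a b 1 0 0 0 = 0 := by
  simp [fab]

/-- `ℤ_(2)` equals the set of rationals of the form
`2(x₁₁ + x₁₂ + y₁₁ + y₁₂)` where
`f₍₃,₃₎(x₁ⱼ)² + f₍₃,₃₎(x₂ⱼ)² + f₍₂,₅₎(y₁ⱼ)² + f₍₂,₅₎(y₂ⱼ)² = 0`. -/
theorem stmt14 :
    Zloc 2 =
      {z : ℚ | ∃ x₁₁ x₁₂ x₁₃ x₁₄ x₂₁ x₂₂ x₂₃ x₂₄
          y₁₁ y₁₂ y₁₃ y₁₄ y₂₁ y₂₂ y₂₃ y₂₄ : ℚ,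
        z = 2 * (x₁₁ + x₁₂ + y₁₁ + y₁₂) ∧
        fab 3 3 x₁₁ x₁₂ x₁₃ x₁₄ ^ 2 + fab 3 3 x₂₁ x₂₂ x₂₃ x₂₄ ^ 2 +
          fab 2 5 y₁₁ y₁₂ y₁₃ y₁₄ ^ 2 + fab 2 5 y₂₁ y₂₂ y₂₃ y₂₄ ^ 2 = 0} := by
  rw [Zloc_two_eq_traceSet_add_traceSet]
  ext z
  constructor
  · rintro ⟨_, ⟨x₁, x₂, x₃, x₄, rfl, hx⟩, _, ⟨y₁, y₂, y₃, y₄, rfl, hy⟩, rfl⟩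
    refine ⟨x₁, x₂, x₃, x₄, 1, 0, 0, 0, y₁, y₂, y₃, y₄, 1, 0, 0, 0, by ring, ?_⟩
    simp [hx, hy, fab_one_zero_zero_zero]
  · rintro ⟨x₁, x₂, x₃, x₄, x₅, x₆, x₇, x₈, y₁, y₂, y₃, y₄, y₅, y₆, y₇, y₈, rfl, h⟩
    have hx : fab 3 3 x₁ x₂ x₃ x₄ = 0 := by nlinarith
    have hy : fab 2 5 y₁ y₂ y₃ y₄ = 0 := by nlinarith
    exact ⟨_, ⟨x₁, x₂, x₃, x₄, rfl, hx⟩, _, ⟨y₁, y₂, y₃, y₄, rfl, hy⟩, by ring⟩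
end

section
/- Let p be a prime with p ≡ 5 (mod 8). Then ℤ_(p) is equal to the set of rational numbers of the form 2(x₁₁ + x₁₂ + y₁₁ + y₁₂) where there exist rationals x_{ij}, y_{ij} (for i ∈ {1,2}, j ∈ {1,2,3,4}) satisfying f_{−2p,−p}(x₁₁,x₁₂,x₁₃,x₁₄)² + f_{−2p,−p}(x₂₁,x₂₂,x₂₃,x₂₄)² + f_{2p,−p}(y₁₁,y₁₂,y₁₃,y₁₄)² + f_{2p,−p}(y₂₁,y₂₂,y₂₃,y₂₄)² = 0. -/
/-!
The equation `f_{a,b} = 0` describes the elements of norm `1` of a quaternion algebra. Since `2`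
and `-2` are nonresidues modulo `p`, the norm forms of both algebras split at `p` as `A + p * B`
with `A` and `B` values of binary forms that are anisotropic modulo `p`. The `p`-adic valuations of
`A` and `p * B` have different parities, so nothing cancels in `A + p * B = 1`, and `x₁` and `x₂`
are `p`-integral.

Conversely, `f_{2p,-p} = 0` with `x₄ = -x₃` contains enough of a hyperbola for its sums `x₁ + x₂` to
come within distance `1` of every rational. A `p`-integral `w` with `w² ≤ 1` is in turn a sum for
`f_{-2p,-p}` as soon as `1 + 2p(1 - w²) = U² + 2C² + pD²` is solvable, and every positive rational
`p`-adic unit has this form: up to squares it is a natural number `m`, and Dirichlet's theorem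
provides a prime `q ≡ m` modulo `p` with `pq ≡ -1` modulo `8m`. Then `q ≡ 3` modulo `8`, so
`q = X² + 2Y²`, and quadratic reciprocity supplies the local conditions of Legendre's theorem for
`m k² = p d² + q z²`.
-/

open scoped NumberTheorySymbols Pointwise WithZero

section Legendre

lemma exists_ne_zero_map_eq_zero_of_card_lt {ι β : Type*} [Fintype ι] [AddGroup β] [Fintype β]
    (φ : (ι → ℤ) →+ β) (n : ι → ℕ) (h : Fintype.card β < ∏ i, n i) :
    ∃ x ≠ 0, φ x = 0 ∧ ∀ i, |x i| < n i := by
  classical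
  let toInt (u : ∀ i, Fin (n i)) (i : ι) : ℤ := (u i : ℕ)
  obtain ⟨u, w, hne, heq⟩ := Fintype.exists_ne_map_eq_of_card_lt (φ ∘ toInt) (by simpa using h)
  refine ⟨toInt u - toInt w, fun h0 => hne ?_, ?_, fun i => ?_⟩
  · ext i
    have := congrFun h0 i
    simp only [toInt, Pi.sub_apply, Pi.zero_apply] at this
    omega
  · simpa [sub_eq_zero] using heq
  · have hu := (u i).isLt
    have hw := (w i).isLt
    simp only [toInt, Pi.sub_apply, abs_lt]
    omega

lemma exists_le_sq_and_forall_abs_lt_sq_lt (n : ℕ) :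
    ∃ k : ℕ, n ≤ k ^ 2 ∧ ∀ x : ℤ, |x| < k → x ^ 2 < n := by
  have hex : ∃ k : ℕ, n ≤ k ^ 2 := ⟨n, Nat.le_self_pow two_ne_zero n⟩
  obtain ⟨k, hk, hmin⟩ : ∃ k, n ≤ k ^ 2 ∧ ∀ j < k, j ^ 2 < n :=
    ⟨Nat.find hex, Nat.find_spec hex, fun _ hj => not_le.1 (Nat.find_min hex hj)⟩
  refine ⟨k, hk, fun x hx => ?_⟩
  have hlt : x.natAbs ^ 2 < n := hmin _ (by zify; exact hx)
  rw [← Int.natAbs_sq]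
  exact_mod_cast hlt

lemma mul_sq_eq_mul_sq_of_mul_eq_mul {R : Type*} [CommRing R] {a b s x y : R} (ha : IsUnit a)
    (hab : a * b = s * s) (h : a * x = s * y) : a * x ^ 2 = b * y ^ 2 := by
  apply ha.mul_left_cancel
  linear_combination (a * x + s * y) * h - y ^ 2 * hab

variable {a b c : ℕ}

lemma exists_addMonoidHom_dvd_of_map_eq_zero
    (hab : a.Coprime b) (hac : a.Coprime c) (hbc : b.Coprime c)
    (ha : IsSquare (-(b * c) : ZMod a)) (hb : IsSquare (a * c : ZMod b))
    (hc : IsSquare (a * b : ZMod c)) :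
    ∃ φ : (Fin 3 → ℤ) →+ ZMod a × ZMod b × ZMod c, ∀ x, φ x = 0 →
      (a * b * c : ℤ) ∣ a * x 0 ^ 2 - b * x 1 ^ 2 - c * x 2 ^ 2 := by
  obtain ⟨r, hr⟩ := ha
  obtain ⟨s, hs⟩ := hb
  obtain ⟨t, ht⟩ := hc
  let φ : (Fin 3 → ℤ) →+ ZMod a × ZMod b × ZMod c := AddMonoidHom.mk'
    (fun x => (b * x 1 - r * x 2, a * x 0 - s * x 2, a * x 0 - t * x 1))
    (fun x y => by ext <;> simp <;> ring)
  refine ⟨φ, fun x hx => ?_⟩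
  simp only [φ, AddMonoidHom.mk'_apply, Prod.mk_eq_zero, sub_eq_zero] at hx
  obtain ⟨hxa, hxb, hxc⟩ := hx
  have hda : (a : ℤ) ∣ a * x 0 ^ 2 - b * x 1 ^ 2 - c * x 2 ^ 2 := by
    have := mul_sq_eq_mul_sq_of_mul_eq_mul (b := -(c : ZMod a))
      ((ZMod.isUnit_iff_coprime b a).2 hab.symm) (by rw [mul_neg, hr]) hxa
    rw [← ZMod.intCast_zmod_eq_zero_iff_dvd]
    push_cast
    linear_combination x 0 ^ 2 * ZMod.natCast_self a - this
  have hdb : (b : ℤ) ∣ a * x 0 ^ 2 - b * x 1 ^ 2 - c * x 2 ^ 2 := by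
    have := mul_sq_eq_mul_sq_of_mul_eq_mul ((ZMod.isUnit_iff_coprime a b).2 hab) hs hxb
    rw [← ZMod.intCast_zmod_eq_zero_iff_dvd]
    push_cast
    linear_combination this - x 1 ^ 2 * ZMod.natCast_self b
  have hdc : (c : ℤ) ∣ a * x 0 ^ 2 - b * x 1 ^ 2 - c * x 2 ^ 2 := by
    have := mul_sq_eq_mul_sq_of_mul_eq_mul ((ZMod.isUnit_iff_coprime a c).2 hac) ht hxc
    rw [← ZMod.intCast_zmod_eq_zero_iff_dvd]
    push_cast
    linear_combination this - x 2 ^ 2 * ZMod.natCast_self c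
  have hcop : IsCoprime ((a : ℤ) * b) c := by
    exact_mod_cast Nat.isCoprime_iff_coprime.2 (hac.mul_left hbc)
  exact hcop.mul_dvd ((Nat.isCoprime_iff_coprime.2 hab).mul_dvd hda hdb) hdc

lemma exists_mul_sq_eq_of_eq_neg {x y z : ℤ} (hb : 0 < b) (hc : 0 < c)
    (h : a * x ^ 2 - b * y ^ 2 - c * z ^ 2 = -(a * b * c)) :
    ∃ x y z : ℤ, x ≠ 0 ∧ a * x ^ 2 = b * y ^ 2 + c * z ^ 2 := by
  -- Multiply `a (x² + bc) = b y² + c z²` by `x² + bc`; on the right, norms from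
  -- `ℤ[√(-bc)]` compose.
  refine ⟨x ^ 2 + b * c, x * y + c * z, x * z - b * y, by positivity, ?_⟩
  linear_combination (x ^ 2 + b * c) * h

lemma exists_ne_zero_map_eq_zero_sq_lt (ha : 0 < a) (hb : 0 < b) (hc : 0 < c)
    (hsq : ¬IsSquare (a * b)) (φ : (Fin 3 → ℤ) →+ ZMod a × ZMod b × ZMod c) :
    ∃ x ≠ 0, φ x = 0 ∧ x 0 ^ 2 < b * c ∧ x 1 ^ 2 < a * c ∧ x 2 ^ 2 < a * b := by
  have : NeZero a := ⟨ha.ne'⟩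
  have : NeZero b := ⟨hb.ne'⟩
  have : NeZero c := ⟨hc.ne'⟩
  obtain ⟨k, hk, hk'⟩ := exists_le_sq_and_forall_abs_lt_sq_lt (b * c)
  obtain ⟨l, hl, hl'⟩ := exists_le_sq_and_forall_abs_lt_sq_lt (a * c)
  obtain ⟨m, hm, hm'⟩ := exists_le_sq_and_forall_abs_lt_sq_lt (a * b)
  have hm_lt : a * b < m ^ 2 := hm.lt_of_ne fun h => hsq ⟨m, by rw [h, sq]⟩
  have hcard : a * (b * c) < k * l * m := by
    refine lt_of_pow_lt_pow_left₀ 2 (by positivity) ?_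
    calc (a * (b * c)) ^ 2 = b * c * (a * c) * (a * b) := by ring
      _ < k ^ 2 * l ^ 2 * m ^ 2 :=
        Nat.mul_lt_mul_of_le_of_lt (Nat.mul_le_mul hk hl) hm_lt <|
          (by positivity : 0 < b * c * (a * c)).trans_le (Nat.mul_le_mul hk hl)
      _ = (k * l * m) ^ 2 := by ring
  obtain ⟨x, hx, hφ, hlt⟩ := exists_ne_zero_map_eq_zero_of_card_lt φ ![k, l, m]
    (by simpa [Fin.prod_univ_three] using hcard)
  exact ⟨x, hx, hφ, by exact_mod_cast hk' _ (hlt 0), by exact_mod_cast hl' _ (hlt 1),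
    by exact_mod_cast hm' _ (hlt 2)⟩

theorem exists_mul_sq_eq_mul_sq_add_mul_sq (ha₀ : 0 < a) (hb₀ : 0 < b) (hc₀ : 0 < c)
    (hab : a.Coprime b) (hac : a.Coprime c) (hbc : b.Coprime c)
    (ha : IsSquare (-(b * c) : ZMod a)) (hb : IsSquare (a * c : ZMod b))
    (hc : IsSquare (a * b : ZMod c)) :
    ∃ x y z : ℤ, x ≠ 0 ∧ a * x ^ 2 = b * y ^ 2 + c * z ^ 2 := by
  by_cases hsq : IsSquare (a * b)
  · obtain ⟨k, hk⟩ := hsq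
    have hk' : (a : ℤ) * b = k * k := by exact_mod_cast hk
    exact ⟨b, k, 0, by exact_mod_cast hb₀.ne', by linear_combination b * hk'⟩
  obtain ⟨φ, hφ⟩ := exists_addMonoidHom_dvd_of_map_eq_zero hab hac hbc ha hb hc
  obtain ⟨x, hx, hφx, h0, h1, h2⟩ := exists_ne_zero_map_eq_zero_sq_lt ha₀ hb₀ hc₀ hsq φ
  obtain ⟨t, ht⟩ := hφ x hφx
  have ha' : (0 : ℤ) < a := by exact_mod_cast ha₀
  have hb' : (0 : ℤ) < b := by exact_mod_cast hb₀
  have hc' : (0 : ℤ) < c := by exact_mod_cast hc₀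
  have h0' := mul_lt_mul_of_pos_left h0 ha'
  have h1' := mul_lt_mul_of_pos_left h1 hb'
  have h2' := mul_lt_mul_of_pos_left h2 hc'
  have hpos : (0 : ℤ) < a * b * c := by positivity
  have hy : 0 ≤ b * x 1 ^ 2 := by positivity
  have hz : 0 ≤ c * x 2 ^ 2 := by positivity
  have ht_lt : t < 1 := by
    refine lt_of_mul_lt_mul_left ?_ hpos.le
    linarith
  have hlt_t : -2 < t := by
    have hx0 : 0 ≤ a * x 0 ^ 2 := by positivity
    refine lt_of_mul_lt_mul_left ?_ hpos.le
    linarith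
  obtain rfl | rfl : t = 0 ∨ t = -1 := by omega
  · have heq : a * x 0 ^ 2 = b * x 1 ^ 2 + c * x 2 ^ 2 := by linear_combination ht
    refine ⟨x 0, x 1, x 2, fun hx0 => hx ?_, heq⟩
    rw [hx0, zero_pow two_ne_zero, mul_zero, eq_comm, add_eq_zero_iff_of_nonneg hy hz] at heq
    ext i
    fin_cases i <;> simp_all [hb₀.ne', hc₀.ne']
  · exact exists_mul_sq_eq_of_eq_neg hb₀ hc₀ (ht.trans (mul_neg_one _))

end Legendre

section TernaryForm

lemma exists_prime_modEq_and_dvd_mul_add_one {m n r : ℕ} (hm : m ≠ 0) (hn : n ≠ 0)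
    (hmn : m.Coprime n) (hr : r.Coprime m) :
    ∃ q : ℕ, q.Prime ∧ q ≡ r [MOD m] ∧ n ∣ m * q + 1 := by
  obtain ⟨u, w, huw⟩ := Nat.isCoprime_iff_coprime.2 hmn
  obtain ⟨a, ha⟩ : ∃ a : ℤ, a = r * (w * n) - u * (u * m) := ⟨_, rfl⟩
  have ham : a = r + m * -(u * (r + u)) := by linear_combination ha + r * huw
  have han : m * a + 1 = n * (m * r * w + w * (1 + u * m)) := by
    linear_combination m * ha - (1 + u * m) * huw
  have hcm : IsCoprime a m := by
    rw [ham]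
    exact (Nat.isCoprime_iff_coprime.2 hr).add_mul_left_left _
  have hcn : IsCoprime a n := ⟨-m, m * r * w + w * (1 + u * m), by linear_combination -han⟩
  obtain ⟨q, -, hq, hqa⟩ := Nat.forall_exists_prime_gt_and_zmodEq 0 (q := m * n) (a := a)
    (mul_ne_zero hm hn) (by push_cast; exact hcm.mul_right hcn)
  push_cast at hqa
  refine ⟨q, hq, ?_, ?_⟩
  · have har : a ≡ r [ZMOD m] :=
      Int.modEq_iff_dvd.2 ⟨u * (r + u), by linear_combination -ham⟩
    exact Int.natCast_modEq_iff.1 ((hqa.of_mul_right _).trans har)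
  · have h := ((hqa.of_mul_left _).mul_left m).add_right 1
    rw [han] at h
    have h0 := h.trans (Int.modEq_zero_iff_dvd.2 (dvd_mul_right _ _))
    exact_mod_cast Int.modEq_zero_iff_dvd.1 h0

lemma jacobiSym_natCast_eq_one_of_dvd_add_one {m n : ℕ} (h : 4 * m ∣ n + 1) : J(m | n) = 1 := by
  have hm : m ≠ 0 := by
    rintro rfl
    simp at h
  have hn : Odd n := by
    obtain ⟨k, hk⟩ := h
    rw [mul_assoc] at hk
    rw [Nat.odd_iff]
    omega
  have hmod : n % (4 * m) = 4 * m - 1 := by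
    obtain ⟨k, hk⟩ := h
    obtain ⟨j, rfl⟩ : ∃ j, k = j + 1 := Nat.exists_eq_succ_of_ne_zero (by rintro rfl; omega)
    have hn' : n = 4 * m - 1 + 4 * m * j := by
      rw [mul_add_one] at hk
      omega
    rw [hn', Nat.add_mul_mod_self_left, Nat.mod_eq_of_lt (by omega)]
  have hodd : Odd (4 * m - 1) := by
    rw [Nat.odd_iff]
    omega
  have hmul : J(4 * m | 4 * m - 1) = 1 := by
    rw [jacobiSym.mod_left' (a₂ := 1), jacobiSym.one_left]
    refine Int.ModEq.symm (Int.modEq_iff_dvd.2 ?_)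
    push_cast [show 1 ≤ 4 * m by omega]
    rfl
  rwa [jacobiSym.mul_left, jacobiSym.at_four hodd, one_mul, ← hmod, ← jacobiSym.mod_right' m hn]
    at hmul

lemma isSquare_mul_zmod_of_dvd_mul_add_one {p q m : ℕ} [Fact p.Prime] [Fact q.Prime]
    (hp : p % 4 = 1) (hq : q ≡ m [MOD p]) (hdvd : 4 * m ∣ p * q + 1) :
    IsSquare (m * p : ZMod q) := by
  have hq_odd : Odd q := by
    obtain ⟨k, hk⟩ := hdvd
    have : Odd (p * q) := by
      rw [mul_assoc] at hk
      rw [Nat.odd_iff]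
      omega
    exact (Nat.odd_mul.1 this).2
  have hJmul : J(m | p) * J(m | q) = 1 := by
    rw [← jacobiSym.mul_right]
    exact jacobiSym_natCast_eq_one_of_dvd_add_one hdvd
  have hJp : J(p | q) = J(m | p) := by
    rw [jacobiSym.quadratic_reciprocity_one_mod_four hp hq_odd]
    exact jacobiSym.mod_left' (Int.natCast_modEq_iff.2 hq)
  have hJ : J((m * p : ℤ) | q) = 1 := by
    rw [jacobiSym.mul_left, hJp, mul_comm, hJmul]
  simpa using ZMod.isSquare_of_jacobiSym_eq_one hJ

lemma exists_natCast_eq_sq_add_two_mul_sq {q : ℕ} [Fact q.Prime] (hq8 : q % 8 = 3) :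
    ∃ x y : ℚ, q = x ^ 2 + 2 * y ^ 2 := by
  obtain ⟨k, x, y, hk, h⟩ := exists_mul_sq_eq_mul_sq_add_mul_sq (a := q) (b := 1) (c := 2)
    (Fact.out : q.Prime).pos one_pos two_pos (Nat.coprime_one_right q)
    (Nat.coprime_two_right.2 (Nat.odd_iff.2 (by omega))) (Nat.coprime_one_left 2)
    (by simpa using (ZMod.exists_sq_eq_neg_two_iff (p := q) (by omega)).2 (Or.inr hq8))
    ⟨0, Subsingleton.elim _ _⟩ ((by decide : ∀ t : ZMod 2, IsSquare t) _)
  have hk' : (k : ℚ) ≠ 0 := by exact_mod_cast hk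
  have h' : (q : ℚ) * k ^ 2 = x ^ 2 + 2 * y ^ 2 := by exact_mod_cast (by simpa using h)
  refine ⟨x / k, y / k, ?_⟩
  field_simp
  exact h'

theorem exists_natCast_eq_sq_add_two_mul_sq_add_mul_sq {p m : ℕ} [Fact p.Prime]
    (hp8 : p % 8 = 5) (hm : 0 < m) (hmp : m.Coprime p) :
    ∃ U C D : ℚ, m = U ^ 2 + 2 * C ^ 2 + p * D ^ 2 := by
  have hp : p.Prime := Fact.out
  have hp_odd : Odd p := Nat.odd_iff.2 (by omega)
  obtain ⟨q, hq, hqm, hdvd⟩ := exists_prime_modEq_and_dvd_mul_add_one (n := 8 * m) hp.ne_zero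
    (by positivity) (Nat.Coprime.mul_right
      ((Nat.coprime_two_right.2 hp_odd).pow_right 3) hmp.symm) hmp
  have := Fact.mk hq
  have hq8 : q % 8 = 3 := by
    have h8 : 8 ∣ p * q + 1 := (dvd_mul_right 8 m).trans hdvd
    have hmod := Nat.mul_mod p q 8
    rw [hp8] at hmod
    omega
  have hm_dvd : m ∣ p * q + 1 := (dvd_mul_left m 8).trans hdvd
  have hmq : m.Coprime q := by
    refine ((hq.coprime_iff_not_dvd).2 fun h => hq.not_dvd_one ?_).symm
    exact (Nat.dvd_add_right (dvd_mul_left q p)).1 (h.trans hm_dvd)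
  have hpq : p.Coprime q := (Nat.coprime_primes hp hq).2 (by omega)
  have hsq_m : IsSquare (-(p * q) : ZMod m) := by
    have h0 := (ZMod.natCast_eq_zero_iff _ _).2 hm_dvd
    push_cast at h0
    exact ⟨1, by linear_combination -h0⟩
  have hsq_p : IsSquare (m * q : ZMod p) := by
    rw [(ZMod.natCast_eq_natCast_iff _ _ _).2 hqm]
    exact .mul_self _
  have hsq_q : IsSquare (m * p : ZMod q) :=
    isSquare_mul_zmod_of_dvd_mul_add_one (by omega) hqm
      ((mul_dvd_mul_right (by norm_num : 4 ∣ 8) m).trans hdvd)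
  obtain ⟨k, d, z, hk, h⟩ := exists_mul_sq_eq_mul_sq_add_mul_sq hm hp.pos hq.pos hmp hmq hpq
    hsq_m hsq_p hsq_q
  obtain ⟨x, y, hxy⟩ := exists_natCast_eq_sq_add_two_mul_sq hq8
  have hk' : (k : ℚ) ≠ 0 := by exact_mod_cast hk
  have h' : (m : ℚ) * k ^ 2 = p * d ^ 2 + q * z ^ 2 := by exact_mod_cast h
  refine ⟨x * z / k, y * z / k, d / k, ?_⟩
  field_simp
  linear_combination h' + z ^ 2 * hxy

theorem exists_eq_sq_add_two_mul_sq_add_mul_sq {p : ℕ} [Fact p.Prime] (hp8 : p % 8 = 5)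
    {r : ℚ} (hr : 0 < r) (hv : Rat.padicValuation p r = 1) :
    ∃ U C D : ℚ, r = U ^ 2 + 2 * C ^ 2 + p * D ^ 2 := by
  have hp : p.Prime := Fact.out
  have hden : ¬p ∣ r.den := Rat.padicValuation_le_one_iff.1 hv.le
  have hnum : ¬p ∣ r.num.natAbs := by
    rw [← Int.natCast_dvd, ← Int.padicValuation_eq_one_iff, ← Rat.padicValuation_cast,
      ← Rat.mul_den_eq_num, map_mul, hv, one_mul, ← Int.cast_natCast, Rat.padicValuation_cast,
      Int.padicValuation_eq_one_iff]
    exact_mod_cast hden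
  have hcop : (r.num.natAbs * r.den).Coprime p := by
    rw [Nat.coprime_comm, hp.coprime_iff_not_dvd, hp.dvd_mul]
    tauto
  have hnum_pos : 0 < r.num := Rat.num_pos.2 hr
  obtain ⟨U, C, D, h⟩ := exists_natCast_eq_sq_add_two_mul_sq_add_mul_sq hp8
    (Nat.mul_pos (Int.natAbs_pos.2 hnum_pos.ne') r.den_pos) hcop
  have hr' : r * r.den ^ 2 = U ^ 2 + 2 * C ^ 2 + p * D ^ 2 := by
    rw [← h, Nat.cast_mul, Nat.cast_natAbs, abs_of_pos hnum_pos, ← Rat.mul_den_eq_num]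
    ring
  refine ⟨U / r.den, C / r.den, D / r.den, ?_⟩
  field_simp
  exact hr'

end TernaryForm

section Integrality

lemma map_sq_add_mul_sq_of_anisotropic {K Γ₀ : Type*} [Field K]
    [LinearOrderedCommGroupWithZero Γ₀] {v : Valuation K Γ₀} {c : K}
    (hc : ∀ t, v t ≤ 1 → v (t ^ 2 + c) = 1) (x y : K) :
    v (x ^ 2 + c * y ^ 2) = max (v x) (v y) ^ 2 := by
  have hc1 : v c = 1 := by simpa using hc 0 (by simp)
  rcases lt_or_ge (v y) (v x) with h | h
  · have hlt : v (c * y ^ 2) < v (x ^ 2) := by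
      rw [map_mul, hc1, one_mul, map_pow, map_pow]
      exact pow_lt_pow_left₀ h zero_le two_ne_zero
    rw [v.map_add_eq_of_lt_left hlt, map_pow, max_eq_left h.le]
  · rcases eq_or_ne y 0 with rfl | hy
    · simp_all
    have hdiv : v (x / y) ≤ 1 := by
      rw [map_div₀]
      exact div_le_one_of_le₀ h zero_le
    have hfactor : x ^ 2 + c * y ^ 2 = y ^ 2 * ((x / y) ^ 2 + c) := by field_simp
    rw [hfactor, map_mul, hc _ hdiv, mul_one, map_pow, max_eq_right h]

lemma le_one_of_exp_neg_one_mul_sq_le_one {t : ℤᵐ⁰} (h : WithZero.exp (-1) * t ^ 2 ≤ 1) :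
    t ≤ 1 := by
  induction t using WithZero.expRecOn with
  | zero => simp
  | exp n =>
    rw [← WithZero.exp_nsmul, ← WithZero.exp_add, ← WithZero.exp_zero, WithZero.exp_le_exp,
      nsmul_eq_mul] at h
    rw [← WithZero.exp_zero, WithZero.exp_le_exp]
    push_cast at h
    omega

lemma sq_ne_exp_neg_one_mul_sq {s t : ℤᵐ⁰} (ht : t ≠ 0) : s ^ 2 ≠ WithZero.exp (-1) * t ^ 2 := by
  induction s using WithZero.expRecOn with
  | zero => simpa using ht
  | exp k =>
    induction t using WithZero.expRecOn with
    | zero => exact absurd rfl ht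
    | exp n =>
      rw [← WithZero.exp_nsmul, ← WithZero.exp_nsmul, ← WithZero.exp_add, Ne,
        WithZero.exp_inj, nsmul_eq_mul, nsmul_eq_mul]
      push_cast
      omega

lemma map_le_one_of_norm_eq_one {K : Type*} [Field K] {v : Valuation K ℤᵐ⁰} {c π : K}
    (hc : ∀ t, v t ≤ 1 → v (t ^ 2 + c) = 1) (hπ : v π = WithZero.exp (-1)) {x₁ x₂ x₃ x₄ : K}
    (h : x₁ ^ 2 + c * π * x₂ ^ 2 + π * x₃ ^ 2 + c * π ^ 2 * x₄ ^ 2 = 1) :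
    v x₁ ≤ 1 ∧ v x₂ ≤ 1 := by
  set A := x₁ ^ 2 + c * (π * x₄) ^ 2 with hA
  set B := x₃ ^ 2 + c * x₂ ^ 2 with hB
  have hvA : v A = max (v x₁) (v (π * x₄)) ^ 2 := map_sq_add_mul_sq_of_anisotropic hc _ _
  have hvB : v (π * B) = WithZero.exp (-1) * max (v x₃) (v x₂) ^ 2 := by
    rw [map_mul, hπ, map_sq_add_mul_sq_of_anisotropic hc]
  have hAB : A = 1 - π * B := by rw [hA, hB]; linear_combination h
  have hB1 : v (π * B) ≤ 1 := by
    by_contra! hlt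
    have heq : v A = v (π * B) := by
      rw [hAB]
      exact v.map_sub_eq_of_lt_right (by rwa [map_one])
    rw [hvA, hvB] at heq
    refine sq_ne_exp_neg_one_mul_sq (fun h0 => ?_) heq
    rw [hvB, h0] at hlt
    simp at hlt
  have hA1 : v A ≤ 1 := by
    rw [hAB]
    exact v.map_sub_le v.map_one.le hB1
  exact ⟨(le_max_left _ _).trans ((pow_le_one_iff_of_nonneg zero_le two_ne_zero).1 (hvA ▸ hA1)),
    (le_max_right _ _).trans (le_one_of_exp_neg_one_mul_sq_le_one (hvB ▸ hB1))⟩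

variable {p : ℕ} [Fact p.Prime]

lemma padicValuation_sq_add_intCast_eq_one {c : ℤ} (hc : ¬IsSquare (-c : ZMod p)) {t : ℚ}
    (ht : Rat.padicValuation p t ≤ 1) : Rat.padicValuation p (t ^ 2 + c) = 1 := by
  have hden : ¬(p : ℤ) ∣ t.den := by exact_mod_cast Rat.padicValuation_le_one_iff.1 ht
  have hnorm : ¬(p : ℤ) ∣ t.num ^ 2 + c * t.den ^ 2 := fun h => hden
    (jacobiSym.prime_dvd_of_eq_neg_one (a := -c)
      (ZMod.nonsquare_iff_jacobiSym_eq_neg_one.2 (by exact_mod_cast hc))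
      (by rwa [neg_mul, sub_neg_eq_add])).2
  rw [← Int.padicValuation_eq_one_iff, ← Rat.padicValuation_cast] at hden hnorm
  have hmul : (t ^ 2 + c) * ((t.den : ℤ) : ℚ) ^ 2 = (t.num ^ 2 + c * t.den ^ 2 : ℤ) := by
    push_cast
    rw [← Rat.mul_den_eq_num t]
    ring
  rw [← hnorm, ← hmul, map_mul, map_pow, hden, one_pow, mul_one]

end Integrality

/-- The rationals `x₁ + x₂` for `x₁ + x₂ i + x₃ j + x₄ k` of reduced norm `1` in the quaternion
algebra over `ℚ` with `i² = a` and `j² = b`. -/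
def normOneSums (a b : ℚ) : Set ℚ :=
  {w | ∃ x₁ x₂ x₃ x₄ : ℚ, fab a b x₁ x₂ x₃ x₄ = 0 ∧ x₁ + x₂ = w}

lemma mem_normOneSums_of_eq {a b w U D E : ℚ} (ha : a ≠ 1)
    (h : 1 - a * (1 - w ^ 2) = U ^ 2 - b * (D ^ 2 - a * E ^ 2)) : w ∈ normOneSums a b := by
  -- Substituting `x₁ = w - x₂` in `f_{a,b} = 0` gives a quadratic equation for `x₂`. The norm form
  -- of `ℚ(√a)` being multiplicative, `D + E√a = (1 + √a)(x₃ + x₄√a)` makes its discriminant `4U²`.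
  have ha' : 1 - a ≠ 0 := sub_ne_zero.2 ha.symm
  refine ⟨(U - a * w) / (1 - a), (w - U) / (1 - a), (D - a * E) / (1 - a), (E - D) / (1 - a),
    ?_, by field_simp; ring⟩
  unfold fab
  field_simp
  linear_combination -(1 - a) * h

lemma exists_rat_btwn_sq_eq_mul_sq_sub_one {d x y : ℚ} (hd : 0 < d) (hx : 1 < x) (hxy : x < y) :
    ∃ w D : ℚ, x < w ∧ w < y ∧ D ^ 2 = d * (w ^ 2 - 1) := by
  have hx0 : 0 < x - 1 := sub_pos.2 hx
  have hy0 : 0 < y - 1 := by linarith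
  obtain ⟨t, -, hyt, htx⟩ := exists_rat_pow_btwn two_ne_zero
    (show d + 2 * d / (y - 1) < d + 2 * d / (x - 1) by gcongr) (by positivity)
  rw [Rat.cast_id] at hyt htx
  have hs : 0 < t ^ 2 - d := by
    have : 0 < 2 * d / (y - 1) := by positivity
    linarith
  -- The second intersection with the line of slope `t` through the point `(1, 0)` of the hyperbola.
  refine ⟨1 + 2 * d / (t ^ 2 - d), t * (2 * d / (t ^ 2 - d)), ?_, ?_, ?_⟩
  · have : t ^ 2 - d < 2 * d / (x - 1) := by linarith
    have := (lt_div_comm₀ hs hx0).1 this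
    linarith
  · have : 2 * d / (y - 1) < t ^ 2 - d := by linarith
    have := (div_lt_comm₀ hy0 hs).1 this
    linarith
  · field_simp
    ring

lemma exists_sq_sub_le_one_and_sq_eq_mul_sq_sub_one {d : ℚ} (hd : 0 < d) (u : ℚ) :
    ∃ w D : ℚ, (u - w) ^ 2 ≤ 1 ∧ D ^ 2 = d * (w ^ 2 - 1) := by
  wlog hu : 0 ≤ u generalizing u
  · obtain ⟨w, D, hw, hD⟩ := this (-u) (by linarith)
    exact ⟨-w, D, by linear_combination hw, by linear_combination hD⟩
  rcases le_or_gt u 2 with hu2 | hu2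
  · exact ⟨1, 0, by nlinarith, by ring⟩
  · obtain ⟨w, D, hxw, hwy, hD⟩ := exists_rat_btwn_sq_eq_mul_sq_sub_one hd
      (show 1 < u - 1 by linarith) (show u - 1 < u + 1 by linarith)
    exact ⟨w, D, by nlinarith, hD⟩

lemma exists_mem_normOneSums_sq_sub_le_one {a b : ℚ} (ha : a ≠ 1) (hab : a * b < 0) (u : ℚ) :
    ∃ w ∈ normOneSums a b, (u - w) ^ 2 ≤ 1 := by
  have hb : b ≠ 0 := right_ne_zero_of_mul hab.ne
  have hd : 0 < -a / b := by
    rw [← mul_div_mul_right _ _ hb]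
    exact div_pos (by linarith) (mul_self_pos.2 hb)
  obtain ⟨w, D, hw, hD⟩ := exists_sq_sub_le_one_and_sq_eq_mul_sq_sub_one hd u
  refine ⟨w, mem_normOneSums_of_eq (U := 1) (D := D) (E := 0) ha ?_, hw⟩
  rw [hD]
  field_simp
  ring

section Decomposition

variable {p : ℕ} [Fact p.Prime]

lemma mem_Zloc_iff {x : ℚ} : x ∈ Zloc p ↔ Rat.padicValuation p x ≤ 1 :=
  Rat.padicValuation_le_one_iff.symm

lemma div_two_mem_Zloc_iff (hp : p ≠ 2) {x : ℚ} : x / 2 ∈ Zloc p ↔ x ∈ Zloc p := by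
  have h2 : Rat.padicValuation p 2 = 1 := by
    refine (Int.padicValuation_eq_one_iff (x := 2)).2 fun h => hp ?_
    exact (Nat.prime_dvd_prime_iff_eq Fact.out Nat.prime_two).1 (by exact_mod_cast h)
  rw [mem_Zloc_iff, mem_Zloc_iff, map_div₀, h2, div_one]

lemma normOneSums_subset_Zloc {c : ℤ} (hc : ¬IsSquare (-c : ZMod p)) :
    normOneSums (-c * p) (-p) ⊆ Zloc p := by
  rintro _ ⟨x₁, x₂, x₃, x₄, h, rfl⟩
  have h12 := map_le_one_of_norm_eq_one (x₁ := x₁) (x₂ := x₂) (x₃ := x₃) (x₄ := x₄)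
    (fun _ => padicValuation_sq_add_intCast_eq_one hc) (Rat.padicValuation_self p)
    (by unfold fab at h; linear_combination h)
  exact mem_Zloc_iff.2 ((Rat.padicValuation p).map_add_le h12.1 h12.2)

lemma normOneSums_neg_two_mul_subset_Zloc (hp : p % 8 = 5) :
    normOneSums (-2 * p) (-p) ⊆ Zloc p := by
  simpa using normOneSums_subset_Zloc (p := p) (c := 2) (by
    push_cast
    rw [ZMod.exists_sq_eq_neg_two_iff (by omega)]
    omega)

lemma normOneSums_two_mul_subset_Zloc (hp : p % 8 = 5) :
    normOneSums (2 * p) (-p) ⊆ Zloc p := by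
  simpa using normOneSums_subset_Zloc (p := p) (c := -2) (by
    push_cast
    rw [neg_neg, ZMod.exists_sq_eq_two_iff (by omega)]
    omega)

lemma mem_normOneSums_of_mem_Zloc_of_sq_le_one (hp : p % 8 = 5) {w : ℚ} (hw : w ∈ Zloc p)
    (hw1 : w ^ 2 ≤ 1) : w ∈ normOneSums (-2 * p) (-p) := by
  have hp0 : (0 : ℚ) < p := by exact_mod_cast (Fact.out : p.Prime).pos
  have hlt : Rat.padicValuation p (p * (2 * (1 - w ^ 2))) < 1 := by
    have h2 : Rat.padicValuation p 2 ≤ 1 := Int.padicValuation_le_one p 2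
    have hw2 : Rat.padicValuation p (1 - w ^ 2) ≤ 1 := by
      refine (Rat.padicValuation p).map_sub_le (map_one _).le ?_
      rw [map_pow]
      exact pow_le_one₀ zero_le (mem_Zloc_iff.1 hw)
    rw [map_mul, map_mul, Rat.padicValuation_self]
    refine mul_lt_one_of_lt_of_le ?_ (mul_le_one' h2 hw2)
    rw [← WithZero.exp_zero, WithZero.exp_lt_exp]
    norm_num
  have hpos : 0 < 1 + p * (2 * (1 - w ^ 2)) := by
    have : 0 ≤ 1 - w ^ 2 := sub_nonneg.2 hw1
    positivity
  obtain ⟨U, C, D, h⟩ := exists_eq_sq_add_two_mul_sq_add_mul_sq hp hpos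
    ((Rat.padicValuation p).map_one_add_of_lt hlt)
  refine mem_normOneSums_of_eq (U := U) (D := D) (E := C / p) (by linarith) ?_
  field_simp
  linear_combination h

theorem Zloc_eq_normOneSums_add_normOneSums (hp : p % 8 = 5) :
    Zloc p = normOneSums (-2 * p) (-p) + normOneSums (2 * p) (-p) := by
  have hp0 : (0 : ℚ) < p := by exact_mod_cast (Fact.out : p.Prime).pos
  ext u
  rw [Set.mem_add]
  constructor
  · intro hu
    obtain ⟨w, hw, huw⟩ := exists_mem_normOneSums_sq_sub_le_one
      (a := 2 * p) (b := -p) (by norm_cast; omega) (by nlinarith) u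
    have hw' : w ∈ Zloc p := normOneSums_two_mul_subset_Zloc hp hw
    have hsub : u - w ∈ Zloc p := by
      rw [mem_Zloc_iff] at hu hw' ⊢
      exact (Rat.padicValuation p).map_sub_le hu hw'
    exact ⟨u - w, mem_normOneSums_of_mem_Zloc_of_sq_le_one hp hsub huw, w, hw, sub_add_cancel u w⟩
  · rintro ⟨s, hs, w, hw, rfl⟩
    have hs' := normOneSums_neg_two_mul_subset_Zloc hp hs
    have hw' := normOneSums_two_mul_subset_Zloc hp hw
    rw [mem_Zloc_iff] at hs' hw' ⊢
    exact (Rat.padicValuation p).map_add_le hs' hw'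

end Decomposition

/-- For a prime `p ≡ 5 (mod 8)`, `ℤ_(p)` equals the set of
rationals of the form `2(x₁₁ + x₁₂ + y₁₁ + y₁₂)` where
`f₍₋₂p,₋p₎(x₁ⱼ)² + f₍₋₂p,₋p₎(x₂ⱼ)² + f₍₂p,₋p₎(y₁ⱼ)² + f₍₂p,₋p₎(y₂ⱼ)² = 0`. -/
theorem stmt16 (p : ℕ) (hp : p.Prime) (hmod : p % 8 = 5) :
    Zloc p =
      {z : ℚ | ∃ x₁₁ x₁₂ x₁₃ x₁₄ x₂₁ x₂₂ x₂₃ x₂₄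
          y₁₁ y₁₂ y₁₃ y₁₄ y₂₁ y₂₂ y₂₃ y₂₄ : ℚ,
        z = 2 * (x₁₁ + x₁₂ + y₁₁ + y₁₂) ∧
        fab (-2 * (p : ℚ)) (-(p : ℚ)) x₁₁ x₁₂ x₁₃ x₁₄ ^ 2 +
          fab (-2 * (p : ℚ)) (-(p : ℚ)) x₂₁ x₂₂ x₂₃ x₂₄ ^ 2 +
          fab (2 * (p : ℚ)) (-(p : ℚ)) y₁₁ y₁₂ y₁₃ y₁₄ ^ 2 +
          fab (2 * (p : ℚ)) (-(p : ℚ)) y₂₁ y₂₂ y₂₃ y₂₄ ^ 2 = 0} := by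
  have := Fact.mk hp
  ext z
  rw [← div_two_mem_Zloc_iff (by omega), Zloc_eq_normOneSums_add_normOneSums hmod, Set.mem_add]
  constructor
  · rintro ⟨_, ⟨x₁, x₂, x₃, x₄, hx, rfl⟩, _, ⟨y₁, y₂, y₃, y₄, hy, rfl⟩, hz⟩
    refine ⟨x₁, x₂, x₃, x₄, 1, 0, 0, 0, y₁, y₂, y₃, y₄, 1, 0, 0, 0, by linarith, ?_⟩
    rw [hx, hy]
    simp [fab]
  · rintro ⟨x₁, x₂, x₃, x₄, _, _, _, _, y₁, y₂, y₃, y₄, _, _, _, _, rfl, h⟩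
    rw [add_eq_zero_iff_of_nonneg (by positivity) (by positivity),
      add_eq_zero_iff_of_nonneg (by positivity) (by positivity),
      add_eq_zero_iff_of_nonneg (by positivity) (by positivity)] at h
    obtain ⟨⟨⟨hx, -⟩, hy⟩, -⟩ := h
    exact ⟨_, ⟨x₁, x₂, x₃, x₄, pow_eq_zero_iff two_ne_zero |>.1 hx, rfl⟩,
      _, ⟨y₁, y₂, y₃, y₄, pow_eq_zero_iff two_ne_zero |>.1 hy, rfl⟩, by ring⟩
end
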